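/- Moment evaluation (2.17). For every a > 0 and every integer i ≥ 1, ∫₀^∞ x^{i−1} Φ(−a;x) dx = (i−1)! · e^{a} · L_{i−1}^{ν₀}(−a) · ∏_{l=1}^r Γ(ν_l+i), where L_n^{ν}(x) := ∑_{k=0}^n (−1)^k binom(n+ν, n−k) x^k/k! is the Laguerre polynomial of degree n and parameter ν. -/

import Mathlib

open MeasureTheory Filter Topology

noncomputable section


/-- Pochhammer symbol `(a)_j` over `ℝ`. -/
def poch (a : ℝ) (j : ℕ) : ℝ := ∏ i ∈ Finset.range j, (a + i)

/-- The hypergeometric function `₀F₁(b; z)` for complex argument `z`. -/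
def hyp0F1 (b : ℝ) (z : ℂ) : ℂ :=
  ∑' k : ℕ, (Real.Gamma b : ℂ) * z ^ k /
    ((Nat.factorial k : ℂ) * (Real.Gamma (b + k) : ℂ))

/-- The hypergeometric function `₀F₁(b; z)` for real argument `z`. -/
def hyp0F1R (b z : ℝ) : ℝ :=
  ∑' k : ℕ, Real.Gamma b * z ^ k / (Nat.factorial k * Real.Gamma (b + k))

/-- The terminating hypergeometric sum `₁F₁(-k; b; u)`. -/
def hyp1F1T (k : ℕ) (b u : ℝ) : ℝ :=
  ∑ j ∈ Finset.range (k + 1),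
    poch (-(k : ℝ)) j / (poch b j * Nat.factorial j) * u ^ j

/-- The function `Ψ(u;x)` of the paper. -/
def Psi (r ν0 : ℕ) (ν : Fin r → ℕ) (u x : ℝ) : ℝ :=
  (1 / Real.Gamma ((ν0 : ℝ) + 1)) *
    ∑' k : ℕ, x ^ k / Nat.factorial k * hyp1F1T k ((ν0 : ℝ) + 1) u *
      ∏ l, 1 / Real.Gamma ((ν l : ℝ) + 1 + k)

/-- The positive orthant in `ℝ^r`. -/
def posOrth (r : ℕ) : Set (Fin r → ℝ) := {t | ∀ i, 0 < t i}

/-- The function `Φ(v;y)` of the paper, complex `v`. -/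
def Phi (r ν0 : ℕ) (ν : Fin r → ℕ) (v : ℂ) (y : ℝ) : ℂ :=
  ((1 / Real.Gamma ((ν0 : ℝ) + 1) : ℝ) : ℂ) *
    ∫ t in posOrth r,
      (((∏ i, (t i) ^ ((ν i : ℝ) - 1) * Real.exp (-t i)) *
          (y / ∏ i, t i) ^ ν0 * Real.exp (-(y / ∏ i, t i)) : ℝ) : ℂ) *
        hyp0F1 ((ν0 : ℝ) + 1) (-(v * ((y / ∏ i, t i : ℝ) : ℂ)))

/-- The function `Φ(v;y)` of the paper, real `v`. -/
def PhiR (r ν0 : ℕ) (ν : Fin r → ℕ) (v y : ℝ) : ℝ :=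
  (1 / Real.Gamma ((ν0 : ℝ) + 1)) *
    ∫ t in posOrth r,
      ((∏ i, (t i) ^ ((ν i : ℝ) - 1) * Real.exp (-t i)) *
          (y / ∏ i, t i) ^ ν0 * Real.exp (-(y / ∏ i, t i))) *
        hyp0F1R ((ν0 : ℝ) + 1) (-(v * (y / ∏ i, t i)))

/-- The double-contour-integral correlation kernel `K_N(x,y)` of Proposition 2.1,
with `C` the counterclockwise circle of center `c` and radius `R`. -/
def KN (r ν0 N : ℕ) (ν : Fin r → ℕ) (a : Fin N → ℝ) (c : ℂ) (R : ℝ) (x y : ℝ) : ℂ :=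
  ∫ u in Set.Ioi (0 : ℝ),
    (2 * Real.pi * Complex.I)⁻¹ *
      ∮ v in C(c, R),
        (u : ℂ) ^ ν0 * Complex.exp (-(u : ℂ) + v) * ((Psi r ν0 ν u x : ℝ) : ℂ) *
          Phi r ν0 ν v y * ((u : ℂ) - v)⁻¹ * ∏ l, ((u : ℂ) + (a l : ℂ)) / (v + (a l : ℂ))

/-- An admissible contour for `K_N`: a counterclockwise circle contained in the left
half-plane which encloses all the points `-a l`. -/
def AdmCircle (N : ℕ) (a : Fin N → ℝ) (c : ℂ) (R : ℝ) : Prop :=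
  0 < R ∧ c.re + R < 0 ∧ ∀ l, ‖-(a l : ℂ) - c‖ < R

/-- The Meijer G-function `G^{1,0}_{0,r+2}(—;0,-ν₀,…,-ν_r | z)`, complex argument. -/
def G1 (r ν0 : ℕ) (ν : Fin r → ℕ) (z : ℂ) : ℂ :=
  ∑' k : ℕ, (-z) ^ k /
    ((Nat.factorial k : ℂ) * (Real.Gamma ((ν0 : ℝ) + 1 + k) : ℂ) *
      ∏ l, (Real.Gamma ((ν l : ℝ) + 1 + k) : ℂ))

/-- The Meijer G-function `G^{1,0}_{0,r+2}(—;0,-ν₀,…,-ν_r | z)`, real argument. -/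
def G1R (r ν0 : ℕ) (ν : Fin r → ℕ) (z : ℝ) : ℝ :=
  ∑' k : ℕ, (-z) ^ k /
    (Nat.factorial k * Real.Gamma ((ν0 : ℝ) + 1 + k) *
      ∏ l, Real.Gamma ((ν l : ℝ) + 1 + k))

/-- `g₀(w) = ∑ (-1)^k w^{ν₀+k}/(k! Γ(ν₀+k+1))`, complex argument. -/
def g0C (ν0 : ℕ) (w : ℂ) : ℂ :=
  ∑' k : ℕ, (-1 : ℂ) ^ k * w ^ (ν0 + k) /
    ((Nat.factorial k : ℂ) * (Real.Gamma ((ν0 : ℝ) + k + 1) : ℂ))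

/-- `g₀(w)`, real argument. -/
def g0R (ν0 : ℕ) (w : ℝ) : ℝ :=
  ∑' k : ℕ, (-1 : ℝ) ^ k * w ^ (ν0 + k) /
    (Nat.factorial k * Real.Gamma ((ν0 : ℝ) + k + 1))

/-- The Meijer G-function `G^{r+1,0}_{0,r+2}(—;ν₀,…,ν_r,0 | z)` for `z > 0`, real form. -/
def G2R (r ν0 : ℕ) (ν : Fin r → ℕ) (z : ℝ) : ℝ :=
  ∫ t in posOrth r,
    (∏ l, (t l) ^ ((ν l : ℝ) - 1) * Real.exp (-t l)) * g0R ν0 (z / ∏ l, t l)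

/-- The critical hard-edge kernel `𝒦^{h,r}(ξ,η;τ)` of Theorem 1.2, the inner integral
running up the imaginary axis `v = i t`. -/
def Kcrit (r ν0 : ℕ) (ν : Fin r → ℕ) (G2 : ℂ → ℂ) (τ ξ η : ℝ) : ℂ :=
  (2 * Real.pi * Complex.I)⁻¹ *
    ∫ u in Set.Ioi (0 : ℝ), ∫ t : ℝ,
      ((u : ℂ) / (Complex.I * t)) ^ ν0 *
        Complex.exp (-(τ : ℂ) * u - (u : ℂ) ^ 2 / 2 + (τ : ℂ) * (Complex.I * t) +
          (Complex.I * t) ^ 2 / 2) *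
        ((u : ℂ) - Complex.I * t)⁻¹ * G1 r ν0 ν ((u * ξ : ℝ) : ℂ) *
        G2 (Complex.I * t * (η : ℂ)) * Complex.I

/-- The deformed critical kernel `𝒦^{h,r}_m(ξ,η;τ,σ)` of Theorem 1.3, the inner integral
running up the vertical line `Re v = -c`. -/
def KcritLine (r ν0 m : ℕ) (ν : Fin r → ℕ) (σ : ℕ → ℝ) (G2 : ℂ → ℂ) (c τ ξ η : ℝ) : ℂ :=
  (2 * Real.pi * Complex.I)⁻¹ *
    ∫ u in Set.Ioi (0 : ℝ), ∫ t : ℝ,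
      ((u : ℂ) / (-(c : ℂ) + Complex.I * t)) ^ ν0 *
        Complex.exp (-(τ : ℂ) * u - (u : ℂ) ^ 2 / 2 +
          (τ : ℂ) * (-(c : ℂ) + Complex.I * t) + (-(c : ℂ) + Complex.I * t) ^ 2 / 2) *
        ((u : ℂ) - (-(c : ℂ) + Complex.I * t))⁻¹ *
        (∏ j ∈ Finset.range m,
          ((u : ℂ) + (σ j : ℂ)) / ((-(c : ℂ) + Complex.I * t) + (σ j : ℂ))) *
        G1 r ν0 ν ((u * ξ : ℝ) : ℂ) * G2 ((-(c : ℂ) + Complex.I * t) * (η : ℂ)) * Complex.I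




/-- `Ψ(u;x)` in the case `r = 0`. -/
def Psi0 (ν0 : ℕ) (u x : ℝ) : ℝ :=
  Real.exp x * hyp0F1R ((ν0 : ℝ) + 1) (-(u * x)) / Real.Gamma ((ν0 : ℝ) + 1)

/-- `Φ(v;y)` in the case `r = 0`, complex `v`. -/
def Phi0 (ν0 : ℕ) (v : ℂ) (y : ℝ) : ℂ :=
  ((y ^ ν0 * Real.exp (-y) / Real.Gamma ((ν0 : ℝ) + 1) : ℝ) : ℂ) *
    hyp0F1 ((ν0 : ℝ) + 1) (-(v * (y : ℂ)))

/-- The kernel `K_N` in the case `r = 0`. -/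
def KN0 (ν0 N : ℕ) (a : Fin N → ℝ) (c : ℂ) (R : ℝ) (x y : ℝ) : ℂ :=
  ∫ u in Set.Ioi (0 : ℝ),
    (2 * Real.pi * Complex.I)⁻¹ *
      ∮ v in C(c, R),
        (u : ℂ) ^ ν0 * Complex.exp (-(u : ℂ) + v) * ((Psi0 ν0 u x : ℝ) : ℂ) *
          Phi0 ν0 v y * ((u : ℂ) - v)⁻¹ * ∏ l, ((u : ℂ) + (a l : ℂ)) / (v + (a l : ℂ))

/-- Laguerre polynomial `L_n^{ν}(x)`. -/
def laguerreL (n νp : ℕ) (x : ℝ) : ℝ :=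
  ∑ k ∈ Finset.range (n + 1),
    (-1 : ℝ) ^ k * (Nat.choose (n + νp) (n - k)) * x ^ k / Nat.factorial k

/-- The function `Ψ^{(μ)}(u;x)` of Section 4. -/
def PsiMu (r ν0 : ℕ) (μ ν : Fin r → ℕ) (u x : ℝ) : ℝ :=
  (1 / Real.Gamma ((ν0 : ℝ) + 1)) *
    ∑' k : ℕ, x ^ k / Nat.factorial k * hyp1F1T k ((ν0 : ℝ) + 1) u *
      ∏ l, Real.Gamma ((μ l : ℝ) + 1 + k) / Real.Gamma ((ν l : ℝ) + 1 + k)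

/-- The open unit cube in `ℝ^r`. -/
def unitCube (r : ℕ) : Set (Fin r → ℝ) := {t | ∀ i, 0 < t i ∧ t i < 1}

/-- The function `Φ^{(μ)}(v;y)` of Section 4, complex `v`. -/
def PhiMu (r ν0 : ℕ) (μ ν : Fin r → ℕ) (v : ℂ) (y : ℝ) : ℂ :=
  ((1 / (Real.Gamma ((ν0 : ℝ) + 1) * ∏ l, Real.Gamma ((μ l : ℝ) - (ν l : ℝ))) : ℝ) : ℂ) *
    ∫ t in unitCube r,
      (((∏ l, (t l) ^ ((ν l : ℝ) - 1) * (1 - t l) ^ ((μ l : ℝ) - (ν l : ℝ) - 1)) *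
          (y / ∏ l, t l) ^ ν0 * Real.exp (-(y / ∏ l, t l)) : ℝ) : ℂ) *
        hyp0F1 ((ν0 : ℝ) + 1) (-(v * ((y / ∏ l, t l : ℝ) : ℂ)))

/-- The function `Φ^{(μ)}(v;y)` of Section 4, real `v`. -/
def PhiMuR (r ν0 : ℕ) (μ ν : Fin r → ℕ) (v y : ℝ) : ℝ :=
  (1 / (Real.Gamma ((ν0 : ℝ) + 1) * ∏ l, Real.Gamma ((μ l : ℝ) - (ν l : ℝ)))) *
    ∫ t in unitCube r,
      ((∏ l, (t l) ^ ((ν l : ℝ) - 1) * (1 - t l) ^ ((μ l : ℝ) - (ν l : ℝ) - 1)) *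
          (y / ∏ l, t l) ^ ν0 * Real.exp (-(y / ∏ l, t l))) *
        hyp0F1R ((ν0 : ℝ) + 1) (-(v * (y / ∏ l, t l)))

/-- The kernel `K_N` for the truncated-unitary product of Section 4. -/
def KNmu (r ν0 N : ℕ) (μ ν : Fin r → ℕ) (a : Fin N → ℝ) (c : ℂ) (R : ℝ) (x y : ℝ) : ℂ :=
  ∫ u in Set.Ioi (0 : ℝ),
    (2 * Real.pi * Complex.I)⁻¹ *
      ∮ v in C(c, R),
        (u : ℂ) ^ ν0 * Complex.exp (-(u : ℂ) + v) * ((PsiMu r ν0 μ ν u x : ℝ) : ℂ) *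
          PhiMu r ν0 μ ν v y * ((u : ℂ) - v)⁻¹ * ∏ l, ((u : ℂ) + (a l : ℂ)) / (v + (a l : ℂ))

/-- Mixed domain `(0,1)^q × (0,∞)^{r-q}`. -/
def mixedSet (r q : ℕ) : Set (Fin r → ℝ) := {t | ∀ l, 0 < t l ∧ ((l : ℕ) < q → t l < 1)}

/-- The Meijer G-function `G^{1,q}_{q,r+2}(-μ₁,…,-μ_q; 0,-ν₀,…,-ν_r | z)`, real form. -/
def G1qR (r ν0 q : ℕ) (μ ν : Fin r → ℕ) (z : ℝ) : ℝ :=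
  ∑' k : ℕ, (-z) ^ k *
    (∏ l ∈ Finset.univ.filter fun l : Fin r => (l : ℕ) < q, Real.Gamma ((μ l : ℝ) + 1 + k)) /
    (Nat.factorial k * Real.Gamma ((ν0 : ℝ) + 1 + k) *
      ∏ l, Real.Gamma ((ν l : ℝ) + 1 + k))

/-- The Meijer G-function `G^{1,q}_{q,r+2}(-μ₁,…,-μ_q; 0,-ν₀,…,-ν_r | z)`, complex form. -/
def G1q (r ν0 q : ℕ) (μ ν : Fin r → ℕ) (z : ℂ) : ℂ :=
  ∑' k : ℕ, (-z) ^ k *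
    ((∏ l ∈ Finset.univ.filter fun l : Fin r => (l : ℕ) < q,
      Real.Gamma ((μ l : ℝ) + 1 + k) : ℝ) : ℂ) /
    ((Nat.factorial k : ℂ) * (Real.Gamma ((ν0 : ℝ) + 1 + k) : ℂ) *
      ∏ l, (Real.Gamma ((ν l : ℝ) + 1 + k) : ℂ))

/-- The Meijer G-function `G^{r+1,0}_{q,r+2}(μ₁,…,μ_q; ν₀,…,ν_r,0 | z)` for `z > 0`. -/
def G2qR (r ν0 q : ℕ) (μ ν : Fin r → ℕ) (z : ℝ) : ℝ :=
  ∫ t in mixedSet r q,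
    (∏ l : Fin r, if l.val < q then
        (t l) ^ ((ν l : ℝ) - 1) * (1 - t l) ^ ((μ l : ℝ) - (ν l : ℝ) - 1) /
          Real.Gamma ((μ l : ℝ) - (ν l : ℝ))
      else (t l) ^ ((ν l : ℝ) - 1) * Real.exp (-t l)) *
      g0R ν0 (z / ∏ l, t l)



lemma aux_gamma (ν0 k : ℕ) : Real.Gamma ((ν0 : ℝ) + 1 + k) = (ν0 + k).factorial := by
  rw [← Real.Gamma_nat_eq_factorial]; push_cast; ring_nf

lemma aux_gamma0 (ν0 : ℕ) : Real.Gamma ((ν0 : ℝ) + 1) = ν0.factorial :=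
  Real.Gamma_nat_eq_factorial ν0

lemma aux_shift (a : ℝ) (j : ℕ) :
    HasSum (fun k : ℕ => a ^ k / k.factorial * (k.choose j : ℝ))
      (a ^ j / j.factorial * Real.exp a) := by
  have hinj : Function.Injective (fun m : ℕ => m + j) := fun x y h => by simpa using h
  rw [← hinj.hasSum_iff]
  · have h := (NormedSpace.expSeries_div_hasSum_exp (𝔸 := ℝ) a).mul_left (a ^ j / j.factorial)
    rw [← Real.exp_eq_exp_ℝ] at h
    refine h.congr_fun ?_
    intro m
    have hc := Nat.add_choose_mul_factorial_mul_factorial m j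
    have hc' : (((m + j).choose j : ℕ) : ℝ) * j.factorial * m.factorial = (m + j).factorial := by
      rw [← hc]; push_cast
      rw [← Nat.choose_symm_add]; ring
    have h1 : (j.factorial : ℝ) ≠ 0 := by positivity
    have h2 : (m.factorial : ℝ) ≠ 0 := by positivity
    have h3 : ((m + j).factorial : ℝ) ≠ 0 := by positivity
    simp only [Function.comp]
    field_simp
    rw [← hc']; ring
  · intro k hk
    have : k < j := by
      by_contra hlt
      exact hk ⟨k - j, by simp; omega⟩
    simp [Nat.choose_eq_zero_of_lt this]

lemma aux_series (a : ℝ) (n ν0 : ℕ) :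
    HasSum (fun k : ℕ => a ^ k * (n + ν0 + k).factorial / (k.factorial * (ν0 + k).factorial : ℝ))
      (n.factorial * Real.exp a * laguerreL n ν0 (-a)) := by
  have h := (hasSum_sum (s := Finset.range (n + 1)) (fun j _ =>
    (aux_shift a j).mul_left ((n + ν0).choose (n - j) : ℝ))).mul_left (n.factorial : ℝ)
  have hval : n.factorial * Real.exp a * laguerreL n ν0 (-a) = n.factorial *
      ∑ j ∈ Finset.range (n + 1), ((n + ν0).choose (n - j) : ℝ) *
        (a ^ j / j.factorial * Real.exp a) := by
    unfold laguerreL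
    rw [mul_assoc, Finset.mul_sum]
    congr 1
    refine Finset.sum_congr rfl fun j _ => ?_
    rw [neg_pow a j]
    have : ((-1 : ℝ) ^ j) * (-1) ^ j = 1 := by rw [← mul_pow]; simp
    linear_combination (Real.exp a * ((n + ν0).choose (n - j) : ℝ) * a ^ j / j.factorial) * this
  rw [hval]
  refine h.congr_fun ?_
  · intro k
    have hv := Nat.add_choose_eq k (n + ν0) n
    rw [Finset.Nat.sum_antidiagonal_eq_sum_range_succ_mk] at hv
    have hc := Nat.add_choose_mul_factorial_mul_factorial n (ν0 + k)
    have e1 : ∑ j ∈ Finset.range (n + 1),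
        ((n + ν0).choose (n - j) : ℝ) * (a ^ k / k.factorial * (k.choose j : ℝ)) =
        a ^ k / k.factorial * ((k + (n + ν0)).choose n : ℝ) := by
      rw [hv]; push_cast; rw [Finset.mul_sum]
      refine Finset.sum_congr rfl fun j _ => by ring
    rw [e1]
    have e2 : k + (n + ν0) = n + (ν0 + k) := by ring
    have e3 : n + ν0 + k = n + (ν0 + k) := by ring
    rw [e2, e3, ← hc]
    have h1 : (k.factorial : ℝ) ≠ 0 := by positivity
    have h2 : ((ν0 + k).factorial : ℝ) ≠ 0 := by positivity
    push_cast
    field_simp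
    rw [Nat.choose_symm_add]

lemma aux_pos (a : ℝ) (ha : 0 < a) (n ν0 : ℕ) :
    0 < n.factorial * Real.exp a * laguerreL n ν0 (-a) := by
  have h := aux_series a n ν0
  rw [← h.tsum_eq]
  exact h.summable.tsum_pos (fun k => by positivity) 0 (by positivity)

lemma aux_gint (m : ℕ) : ∫ w in Set.Ioi (0 : ℝ), w ^ m * Real.exp (-w) = m.factorial := by
  rw [← Real.Gamma_nat_eq_factorial, Real.Gamma_eq_integral (by positivity)]
  refine setIntegral_congr_fun measurableSet_Ioi fun w _ => ?_
  simp [mul_comm]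

lemma aux_gintble (m : ℕ) : IntegrableOn (fun w : ℝ => w ^ m * Real.exp (-w)) (Set.Ioi 0) := by
  refine Integrable.of_integral_ne_zero ?_
  rw [aux_gint]; positivity

lemma aux_meas (b : ℝ) : Measurable (hyp0F1R b) := by
  unfold hyp0F1R
  refine Measurable.tsum fun k => ?_
  fun_prop

/-- The one dimensional integral. -/
lemma aux_1d (a : ℝ) (ha : 0 < a) (n ν0 : ℕ) :
    ∫ w in Set.Ioi (0 : ℝ), w ^ n * (w ^ ν0 * Real.exp (-w) * hyp0F1R ((ν0 : ℝ) + 1) (a * w)) =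
      Real.Gamma ((ν0 : ℝ) + 1) * (n.factorial * Real.exp a * laguerreL n ν0 (-a)) := by
  let c : ℕ → ℝ := fun k => Real.Gamma ((ν0 : ℝ) + 1) * (a ^ k / (k.factorial * (ν0 + k).factorial))
  let F : ℕ → ℝ → ℝ := fun k w => c k * (w ^ (n + ν0 + k) * Real.exp (-w))
  have hΓ : 0 < Real.Gamma ((ν0 : ℝ) + 1) := Real.Gamma_pos_of_pos (by positivity)
  have hc : ∀ k, 0 ≤ c k := fun k => by positivity
  have hI : ∀ k, ∫ w in Set.Ioi (0 : ℝ), F k w = Real.Gamma ((ν0 : ℝ) + 1) *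
      (a ^ k * (n + ν0 + k).factorial / (k.factorial * (ν0 + k).factorial : ℝ)) := by
    intro k
    simp only [F, c]
    rw [integral_const_mul, aux_gint]; ring
  have hN : ∀ k, ∫ w in Set.Ioi (0 : ℝ), ‖F k w‖ = ∫ w in Set.Ioi (0 : ℝ), F k w := by
    intro k
    refine setIntegral_congr_fun measurableSet_Ioi fun w hw => ?_
    have hw : 0 < w := hw
    have := hc k
    exact Real.norm_of_nonneg (by positivity)
  have hs := (aux_series a n ν0).mul_left (Real.Gamma ((ν0 : ℝ) + 1))
  have h := hasSum_integral_of_summable_integral_norm (μ := volume.restrict (Set.Ioi (0 : ℝ)))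
    (F := F) (fun k => (aux_gintble _).const_mul _) (by simp_rw [hN, hI]; exact hs.summable)
  simp_rw [hI] at h
  rw [← h.unique hs]
  refine setIntegral_congr_fun measurableSet_Ioi fun w hw => ?_
  simp only [hyp0F1R, F, c]
  rw [← tsum_mul_left, ← tsum_mul_left]
  refine tsum_congr fun k => ?_
  rw [aux_gamma]
  ring

lemma aux_orth (r : ℕ) : (volume.restrict (posOrth r) : Measure (Fin r → ℝ)) =
    Measure.pi (fun _ => (volume : Measure ℝ).restrict (Set.Ioi 0)) := by
  rw [← Measure.restrict_pi_pi]
  congr 1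
  ext t; simp [posOrth]

lemma aux_tint (r n : ℕ) (ν : Fin r → ℕ) :
    ∫ t in posOrth r, ((∏ i, (t i) ^ ((ν i : ℝ) - 1) * Real.exp (-t i)) * (∏ i, t i) ^ (n + 1)) =
      ∏ l, Real.Gamma ((ν l : ℝ) + (n + 1 : ℕ)) := by
  simp_rw [← Finset.prod_pow, ← Finset.prod_mul_distrib]
  rw [aux_orth, integral_fintype_prod_eq_prod
    (f := fun i (x : ℝ) => x ^ ((ν i : ℝ) - 1) * Real.exp (-x) * x ^ (n + 1))]
  refine Finset.prod_congr rfl fun l _ => ?_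
  rw [Real.Gamma_eq_integral (by positivity)]
  refine setIntegral_congr_fun measurableSet_Ioi fun w hw => ?_
  have hw : 0 < w := hw
  rw [← Real.rpow_natCast w (n + 1)]
  rw [show (ν l : ℝ) + ((n + 1 : ℕ) : ℝ) - 1 = ((ν l : ℝ) - 1) + ((n + 1 : ℕ) : ℝ) by ring,
    Real.rpow_add hw]
  ring

lemma aux_main (r ν0 n : ℕ) (ν : Fin r → ℕ) (a : ℝ) (ha : 0 < a) :
    ∫ x in Set.Ioi (0 : ℝ), x ^ n * PhiR r ν0 ν (-a) x =
      n.factorial * Real.exp a * laguerreL n ν0 (-a) *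
        ∏ l, Real.Gamma ((ν l : ℝ) + (n + 1 : ℕ)) := by
  have hΓ : 0 < Real.Gamma ((ν0 : ℝ) + 1) := Real.Gamma_pos_of_pos (by positivity)
  set C := n.factorial * Real.exp a * laguerreL n ν0 (-a) with hC
  have hCpos : 0 < C := aux_pos a ha n ν0
  let g : ℝ → ℝ := fun w => w ^ n * (w ^ ν0 * Real.exp (-w) * hyp0F1R ((ν0 : ℝ) + 1) (a * w))
  have hgint : ∫ w in Set.Ioi (0 : ℝ), g w = Real.Gamma ((ν0 : ℝ) + 1) * C := aux_1d a ha n ν0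
  have hgI : IntegrableOn g (Set.Ioi 0) := by
    refine Integrable.of_integral_ne_zero ?_
    rw [hgint]; positivity
  have hgm : Measurable g := by
    have := aux_meas ((ν0 : ℝ) + 1)
    fun_prop
  have hg0 : ∀ w, 0 < w → 0 ≤ g w := by
    intro w hw
    have : 0 ≤ hyp0F1R ((ν0 : ℝ) + 1) (a * w) := by
      unfold hyp0F1R
      refine tsum_nonneg fun k => ?_
      rw [aux_gamma]; positivity
    positivity
  let P : (Fin r → ℝ) → ℝ := fun t => ∏ i, (t i) ^ ((ν i : ℝ) - 1) * Real.exp (-t i)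
  let T : (Fin r → ℝ) → ℝ := fun t => ∏ i, t i
  have hTm : Measurable T := by fun_prop
  have hPm : Measurable P := by fun_prop
  have hT : ∀ t ∈ posOrth r, 0 < T t := fun t ht => Finset.prod_pos fun i _ => ht i
  have hP : ∀ t ∈ posOrth r, 0 ≤ P t := fun t ht =>
    Finset.prod_nonneg fun i _ => mul_nonneg (Real.rpow_nonneg (ht i).le _) (Real.exp_pos _).le
  have hmeas : MeasurableSet (posOrth r) := by
    have : posOrth r = Set.univ.pi (fun _ => Set.Ioi (0 : ℝ)) := by ext t; simp [posOrth]
    rw [this]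
    exact MeasurableSet.univ_pi fun _ => measurableSet_Ioi
  let f : ℝ → (Fin r → ℝ) → ℝ := fun x t => P t * (T t) ^ n * g (x * (T t)⁻¹)
  have hfm : Measurable (Function.uncurry f) := by
    simp only [f, Function.uncurry_def]
    fun_prop
  have hf0 : ∀ x ∈ Set.Ioi (0 : ℝ), ∀ t ∈ posOrth r, 0 ≤ f x t := by
    intro x hx t ht
    have h1 := hT t ht
    have h2 := hP t ht
    have h3 := hg0 (x * (T t)⁻¹) (mul_pos hx (inv_pos.2 h1))
    positivity
  have hfx : ∀ t ∈ posOrth r, ∫ x in Set.Ioi (0 : ℝ), f x t =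
      (Real.Gamma ((ν0 : ℝ) + 1) * C) * (P t * (T t) ^ (n + 1)) := by
    intro t ht
    have h1 := hT t ht
    simp only [f]
    rw [integral_const_mul, integral_comp_mul_right_Ioi g 0 (inv_pos.2 h1), zero_mul, hgint]
    simp only [inv_inv, smul_eq_mul]; ring
  have hfI : ∀ t ∈ posOrth r, IntegrableOn (fun x => f x t) (Set.Ioi 0) := by
    intro t ht
    have h1 := hT t ht
    refine Integrable.const_mul ?_ _
    refine (integrableOn_Ioi_comp_mul_right_iff g 0 (inv_pos.2 h1)).2 ?_
    simpa using hgI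
  have htint : ∫ t in posOrth r, P t * (T t) ^ (n + 1) =
      ∏ l, Real.Gamma ((ν l : ℝ) + (n + 1 : ℕ)) := aux_tint r n ν
  have htI : IntegrableOn (fun t => P t * (T t) ^ (n + 1)) (posOrth r) := by
    refine Integrable.of_integral_ne_zero ?_
    rw [htint]
    exact (Finset.prod_pos fun l _ => Real.Gamma_pos_of_pos (by positivity)).ne'
  have hint : Integrable (Function.uncurry f)
      ((volume.restrict (Set.Ioi (0 : ℝ))).prod (volume.restrict (posOrth r))) := by
    rw [integrable_prod_iff' hfm.aestronglyMeasurable]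
    refine ⟨?_, ?_⟩
    · filter_upwards [ae_restrict_mem hmeas] with t ht using hfI t ht
    · refine Integrable.congr (htI.const_mul (Real.Gamma ((ν0 : ℝ) + 1) * C)) ?_
      filter_upwards [ae_restrict_mem hmeas] with t ht
      rw [← hfx t ht]
      refine setIntegral_congr_fun measurableSet_Ioi fun x hx => ?_
      exact (Real.norm_of_nonneg (hf0 x hx t ht)).symm
  have hswap := integral_integral_swap hint
  have hL : ∀ x ∈ Set.Ioi (0 : ℝ), x ^ n * PhiR r ν0 ν (-a) x =
      (1 / Real.Gamma ((ν0 : ℝ) + 1)) * ∫ t in posOrth r, f x t := by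
    intro x hx
    unfold PhiR
    rw [mul_left_comm, ← integral_const_mul (x ^ n)]
    congr 1
    refine setIntegral_congr_fun hmeas fun t ht => ?_
    have h1 := (hT t ht).ne'
    have e : -(-a * (x / ∏ i, t i)) = a * (x * (T t)⁻¹) := by simp only [T]; ring
    rw [e]
    simp only [f, g]
    rw [show (x / ∏ i, t i) = x * (T t)⁻¹ from div_eq_mul_inv _ _]
    have e2 : x ^ n = (T t) ^ n * (x * (T t)⁻¹) ^ n := by
      rw [← mul_pow]; congr 1; field_simp
    rw [e2]
    simp only [P]
    ring
  rw [setIntegral_congr_fun measurableSet_Ioi hL, integral_const_mul, hswap,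
    setIntegral_congr_fun hmeas hfx, integral_const_mul, htint]
  field_simp

/-- **Moment evaluation (2.17).** -/
theorem moment_2_17 (r ν0 : ℕ) (ν : Fin r → ℕ) (a : ℝ) (ha : 0 < a)
    (i : ℕ) (hi : 1 ≤ i) :
    ∫ x in Set.Ioi (0 : ℝ), x ^ (i - 1) * PhiR r ν0 ν (-a) x =
      (Nat.factorial (i - 1) : ℝ) * Real.exp a * laguerreL (i - 1) ν0 (-a) *
        ∏ l, Real.Gamma ((ν l : ℝ) + i) := by
  obtain ⟨n, rfl⟩ : ∃ n, i = n + 1 := ⟨i - 1, by omega⟩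
  simpa only [Nat.add_sub_cancel] using aux_main r ν0 n ν a ha


end
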